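/- Let 1 < ρ < 2, λ > 0, and μ > 1/(2ρ). Then the function u ↦ G_ρ(−u^ρ/λ) belongs to L^2(0, ∞), i.e., ∫_0^∞ G_ρ(−u^ρ/λ)^2 du < ∞, where G_ρ is the generalized Mittag-Leffler function with parameter μ. -/

import Mathlib

/-!
# Square integrability of the generalized Mittag-Leffler kernel

Inserting Euler's integral `Γ(μ + k) = ∫₀^∞ t^(μ+k-1) e^(-t) dt` into the series turns `G_ρ` into a
Gamma average of the classical Mittag-Leffler function `E_ρ(y) = ∑ y^k / Γ(ρk + 1)`:
`Γ(μ) G_ρ(-x) = ∫₀^∞ t^(μ-1) e^(-t) E_ρ(-xt) dt` (`genML_eq_integral`). If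
`|E_ρ(-y)| ≤ C y^(-a)` with `0 ≤ a < μ`, this gives `|G_ρ(-x)| ≤ C' x^(-a)` (`exists_genML_le`).
For `x = u^ρ / λ` the square is then `O(u^(-2ρa))`, integrable at infinity as soon as
`a > 1/(2ρ)`; near `0` the kernel is continuous. Such an `a < min(μ, 1/ρ)` exists because
`μ > 1/(2ρ)`.

What remains is the bound `|E_ρ(-u^ρ)| ≤ M / u` (`exists_mul_ml_le`). The function
`u ↦ E_ρ(-u^ρ)` has Laplace transform `s^(ρ-1) / (s^ρ + 1)`, hence `u ↦ u E_ρ(-u^ρ)` has Laplace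
transform `H(s) = s^(ρ-2) (s^ρ + 1 - ρ) / (s^ρ + 1)²` (`lapl`), first for real `s > 1` by summing
the series and then for `Re s > 1` by the identity theorem. As `1 < ρ < 2`, the function `s^ρ + 1`
has no zero in the right half-plane, quantitatively `|s^ρ + 1|² ≥ c (1 + |s|^(2ρ))`
(`norm_cpow_add_one_sq_ge`),
so `|H(s)|` is dominated by both `|s|^(ρ-2)` and `|s|^(-2)` up to a constant: it is integrable on every
vertical line `Re s = σ > 0`, uniformly in `σ`. Fourier inversion represents `u E_ρ(-u^ρ)` as the
integral of `e^(su) H(s)` over the line `Re s = 2` (`inversion`), Cauchy's theorem moves that line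
to `Re s = 1/(1+u)` (`line_shift`), and there `|e^(su)| ≤ e`.
-/

open MeasureTheory

/-- The generalized Mittag-Leffler function
`G_ρ(x) = ∑ (μ)_k / Γ(ρk + 1) · x^k` with `(μ)_k = Γ(μ + k)/Γ(μ)`. -/
noncomputable def genML (ρ μ x : ℝ) : ℝ :=
  ∑' k : ℕ, (Real.Gamma (μ + k) / Real.Gamma μ) / Real.Gamma (ρ * k + 1) * x ^ k

open scoped FourierTransform Topology

/-! ### The classical Mittag-Leffler function -/

/-- The classical Mittag-Leffler function `E_ρ(y) = ∑ y^k / Γ(ρk + 1)` on the real line. -/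
noncomputable def ml (ρ y : ℝ) : ℝ := ∑' k : ℕ, y ^ k / Real.Gamma (ρ * k + 1)

lemma factorial_le_Gamma {ρ : ℝ} (hρ : 1 < ρ) (k : ℕ) :
    (k.factorial : ℝ) ≤ Real.Gamma (ρ * k + 1) := by
  rcases Nat.eq_zero_or_pos k with rfl | hk
  · simp
  · have hk' : (1 : ℝ) ≤ k := by exact_mod_cast hk
    rw [← Real.Gamma_nat_eq_factorial]
    have h : (k : ℝ) ≤ ρ * k := by nlinarith
    apply Real.Gamma_strictMonoOn_Ici.monotoneOn
    · simp only [Set.mem_Ici]; linarith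
    · simp only [Set.mem_Ici]; linarith
    · linarith

lemma Gamma_mul_add_one_pos {ρ : ℝ} (hρ : 1 < ρ) (k : ℕ) : 0 < Real.Gamma (ρ * k + 1) :=
  lt_of_lt_of_le (by positivity) (factorial_le_Gamma hρ k)

lemma norm_ml_term_le {ρ : ℝ} (hρ : 1 < ρ) (y : ℝ) (k : ℕ) :
    ‖y ^ k / Real.Gamma (ρ * k + 1)‖ ≤ |y| ^ k / k.factorial := by
  rw [norm_div, norm_pow, Real.norm_eq_abs, Real.norm_of_nonneg (Gamma_mul_add_one_pos hρ k).le]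
  have := factorial_le_Gamma hρ k
  gcongr

lemma summable_ml {ρ : ℝ} (hρ : 1 < ρ) (y : ℝ) :
    Summable (fun k : ℕ => y ^ k / Real.Gamma (ρ * k + 1)) :=
  Summable.of_norm_bounded (Real.summable_pow_div_factorial |y|) (norm_ml_term_le hρ y)

lemma abs_ml_le {ρ : ℝ} (hρ : 1 < ρ) (y : ℝ) : |ml ρ y| ≤ Real.exp |y| := by
  have h := tsum_of_norm_bounded (Real.summable_pow_div_factorial |y|).hasSum
    (norm_ml_term_le hρ y)
  rw [Real.exp_eq_exp_ℝ, NormedSpace.exp_eq_tsum_div]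
  exact h

lemma continuous_ml {ρ : ℝ} (hρ : 1 < ρ) : Continuous (ml ρ) := by
  rw [continuous_iff_continuousAt]
  intro y
  have h : ContinuousOn (ml ρ) (Metric.ball 0 (|y| + 1)) := by
    apply continuousOn_tsum (u := fun k : ℕ => (|y| + 1) ^ k / (k.factorial : ℝ))
    · intro k
      fun_prop
    · exact Real.summable_pow_div_factorial _
    · intro k x hx
      refine (norm_ml_term_le hρ x k).trans ?_
      have : |x| ≤ |y| + 1 := by simpa using (Metric.mem_ball.1 hx).le
      gcongr
  exact h.continuousAt (Metric.isOpen_ball.mem_nhds (by simp))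

/-! ### The Laplace transform in the right half-plane -/

/-- The Laplace transform of `u ↦ u E_ρ(-u^ρ)`, i.e. minus the derivative of
`s ↦ s^(ρ-1) / (s^ρ + 1)`, with the principal branch of the powers. -/
noncomputable def lapl (ρ : ℝ) (s : ℂ) : ℂ :=
  s ^ ((ρ : ℂ) - 2) * (s ^ (ρ : ℂ) + 1 - ρ) / (s ^ (ρ : ℂ) + 1) ^ 2

/-- With `R = |s|^ρ`, one has `|s^ρ + 1|² = R² + 2R cos(ρ arg s) + 1`, and `|ρ arg s| < ρπ/2 < π` keeps
the cosine above `cos(ρπ/2) > -1`. -/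
lemma norm_cpow_add_one_sq_ge {ρ : ℝ} (hρ₁ : 1 < ρ) (hρ₂ : ρ < 2) {s : ℂ} (hs : 0 < s.re) :
    (1 + Real.cos (ρ * (Real.pi / 2))) * (1 + (‖s‖ ^ ρ) ^ 2) ≤ ‖s ^ (ρ : ℂ) + 1‖ ^ 2 := by
  have hs0 : s ≠ 0 := by rintro rfl; simp at hs
  have hR : 0 ≤ ‖s‖ ^ ρ := by positivity
  have hn : ‖s ^ (ρ : ℂ)‖ = ‖s‖ ^ ρ := Complex.norm_cpow_real s ρ
  have hre := Complex.cpow_ofReal_re s ρ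
  have harg : |s.arg| < Real.pi / 2 := by
    rw [Complex.abs_arg_lt_pi_div_two_iff]; exact Or.inl hs
  have hpi := Real.pi_pos
  have hcos : Real.cos (ρ * (Real.pi / 2)) ≤ Real.cos (s.arg * ρ) := by
    rw [← Real.cos_abs (s.arg * ρ)]
    apply Real.cos_le_cos_of_nonneg_of_le_pi (abs_nonneg _)
    · nlinarith
    · rw [abs_mul, abs_of_pos (by linarith : 0 < ρ)]
      nlinarith
  have hneg : Real.cos (ρ * (Real.pi / 2)) ≤ 0 := by
    apply Real.cos_nonpos_of_pi_div_two_le_of_le <;> nlinarith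
  have key : ‖s ^ (ρ : ℂ) + 1‖ ^ 2 = (‖s‖ ^ ρ) ^ 2 + 2 * (‖s‖ ^ ρ * Real.cos (s.arg * ρ)) + 1 := by
    rw [← hn, ← Complex.normSq_eq_norm_sq, ← Complex.normSq_eq_norm_sq, Complex.normSq_add]
    simp only [map_one, mul_one]
    rw [hre, hn]; ring
  rw [key]
  nlinarith [mul_le_mul_of_nonneg_left hcos hR, mul_nonneg (neg_nonneg.2 hneg) (sq_nonneg (‖s‖ ^ ρ - 1))]

lemma one_add_cos_pos {ρ : ℝ} (hρ₁ : 1 < ρ) (hρ₂ : ρ < 2) :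
    0 < 1 + Real.cos (ρ * (Real.pi / 2)) := by
  have hpi := Real.pi_pos
  have := Real.cos_lt_cos_of_nonneg_of_le_pi (x := ρ * (Real.pi / 2)) (y := Real.pi)
    (by positivity) le_rfl (by nlinarith)
  rw [Real.cos_pi] at this
  linarith

lemma cpow_add_one_ne_zero {ρ : ℝ} (hρ₁ : 1 < ρ) (hρ₂ : ρ < 2) {s : ℂ} (hs : 0 < s.re) :
    s ^ (ρ : ℂ) + 1 ≠ 0 := by
  intro h
  have := norm_cpow_add_one_sq_ge hρ₁ hρ₂ hs
  rw [h] at this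
  have h1 := one_add_cos_pos hρ₁ hρ₂
  have : 0 < (1 + Real.cos (ρ * (Real.pi / 2))) * (1 + (‖s‖ ^ ρ) ^ 2) := by positivity
  simp at *
  linarith

/-- The first estimate is the sharp one near `0`, the second near infinity; both hold on the whole
half-plane. -/
lemma lapl_bound {ρ : ℝ} (hρ₁ : 1 < ρ) (hρ₂ : ρ < 2) {s : ℂ} (hs : 0 < s.re) :
    ‖lapl ρ s‖ ≤ 2 / (1 + Real.cos (ρ * (Real.pi / 2))) * ‖s‖ ^ (ρ - 2) ∧
    ‖lapl ρ s‖ ≤ 2 / (1 + Real.cos (ρ * (Real.pi / 2))) * ‖s‖ ^ (-2 : ℝ) := by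
  set c := 1 + Real.cos (ρ * (Real.pi / 2)) with hc
  have hcpos : 0 < c := one_add_cos_pos hρ₁ hρ₂
  have hs0 : s ≠ 0 := by rintro rfl; simp at hs
  have hsn : 0 < ‖s‖ := norm_pos_iff.2 hs0
  have hge := norm_cpow_add_one_sq_ge hρ₁ hρ₂ hs
  rw [← hc] at hge
  set R := ‖s‖ ^ ρ with hR
  have hRpos : 0 < R := by positivity
  have h1 : ‖s ^ ((ρ : ℂ) - 2)‖ = ‖s‖ ^ (ρ - 2) := by
    rw [← Complex.norm_cpow_real s (ρ - 2)]; push_cast; rfl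
  have h2 : ‖s ^ (ρ : ℂ) + 1 - ρ‖ ≤ R + 1 := by
    rw [add_sub_assoc]
    refine (norm_add_le _ _).trans ?_
    rw [Complex.norm_cpow_real]
    have : ‖(1 : ℂ) - ρ‖ ≤ 1 := by
      rw [← Complex.ofReal_one, ← Complex.ofReal_sub, Complex.norm_real, Real.norm_eq_abs, abs_le]
      constructor <;> linarith
    linarith
  have h3 : ‖lapl ρ s‖ ≤ ‖s‖ ^ (ρ - 2) * ((R + 1) / (c * (1 + R ^ 2))) := by
    unfold lapl
    rw [norm_div, norm_mul, norm_pow, h1, mul_div_assoc]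
    gcongr
  have h4 : ‖s‖ ^ (-2 : ℝ) = ‖s‖ ^ (ρ - 2) / R := by
    rw [hR, ← Real.rpow_sub hsn]; congr 1; ring
  have hp : 0 < ‖s‖ ^ (ρ - 2) := by positivity
  refine ⟨h3.trans ?_, h3.trans ?_⟩
  · rw [mul_comm]
    gcongr ?_ * _
    rw [div_le_div_iff₀ (by positivity) (by positivity)]
    nlinarith [sq_nonneg (R - 1), mul_nonneg hcpos.le (sq_nonneg (R - 1)), mul_nonneg hcpos.le (sq_nonneg R)]
  · rw [h4, mul_comm, ← mul_div_right_comm, ← mul_div_assoc, mul_div_right_comm, mul_div_right_comm]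
    gcongr ?_ * _
    rw [div_div, div_le_div_iff₀ (by positivity) (by positivity)]
    nlinarith [sq_nonneg (R - 1), mul_nonneg (mul_pos hcpos hRpos).le (sq_nonneg (R - 1)), mul_nonneg hcpos.le (sq_nonneg (R-1))]

lemma lapl_differentiableAt {ρ : ℝ} (hρ₁ : 1 < ρ) (hρ₂ : ρ < 2) {s : ℂ} (hs : 0 < s.re) :
    DifferentiableAt ℂ (lapl ρ) s := by
  have hsl : s ∈ Complex.slitPlane := Or.inl hs
  have h1 : ∀ a : ℂ, DifferentiableAt ℂ (fun s : ℂ => s ^ a) s := fun a =>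
    differentiableAt_id.cpow_const hsl
  unfold lapl
  refine DifferentiableAt.div ((h1 _).mul (((h1 _).add_const _).sub_const _))
    (((h1 _).add_const _).pow 2) (pow_ne_zero _ (cpow_add_one_ne_zero hρ₁ hρ₂ hs))

/-- An integrable majorant, up to a constant, of `w ↦ |H(σ + iw)|` which does not depend on `σ > 0`.
At `w = 0` its value `0 ^ (ρ - 2) = 0` is a junk value, so that point has to be left out. -/
noncomputable def lineBound (ρ w : ℝ) : ℝ :=
  if |w| ≤ 1 then |w| ^ (ρ - 2) else |w| ^ (-2 : ℝ)

lemma lineBound_integrable {ρ : ℝ} (hρ₁ : 1 < ρ) : Integrable (lineBound ρ) := by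
  have hpos : IntegrableOn (lineBound ρ) (Set.Ioi 0) := by
    rw [← Set.Ioc_union_Ioi_eq_Ioi zero_le_one]
    refine IntegrableOn.union ?_ ?_
    · have h := intervalIntegral.intervalIntegrable_rpow' (a := 0) (b := 1)
        (r := ρ - 2) (by linarith)
      rw [intervalIntegrable_iff_integrableOn_Ioc_of_le zero_le_one] at h
      refine h.congr_fun (fun w hw => ?_) measurableSet_Ioc
      simp [lineBound, abs_of_pos hw.1, hw.2]
    · have h := integrableOn_Ioi_rpow_of_lt (a := -2) (by norm_num) (zero_lt_one (α := ℝ))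
      refine h.congr_fun (fun w hw => ?_) measurableSet_Ioi
      have hw' : (1 : ℝ) < w := hw
      simp [lineBound, abs_of_pos (zero_lt_one.trans hw'), hw']
  have hneg : IntegrableOn (lineBound ρ) (Set.Iic 0) := by
    have h := IntegrableOn.comp_neg_Iio (c := 0) (f := lineBound ρ) (by rwa [neg_zero])
    rw [integrableOn_Iic_iff_integrableOn_Iio]
    exact h.congr_fun (fun w _ => by simp only [lineBound, abs_neg]) measurableSet_Iio
  rw [← integrableOn_univ, ← Set.Iic_union_Ioi (a := (0 : ℝ))]
  exact hneg.union hpos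

lemma lapl_line_bound {ρ : ℝ} (hρ₁ : 1 < ρ) (hρ₂ : ρ < 2) {σ : ℝ} (hσ : 0 < σ) {w : ℝ}
    (hw : w ≠ 0) :
    ‖lapl ρ (σ + w * Complex.I)‖ ≤
      2 / (1 + Real.cos (ρ * (Real.pi / 2))) * lineBound ρ w := by
  have hc := one_add_cos_pos hρ₁ hρ₂
  have hre : (σ + w * Complex.I : ℂ).re = σ := by simp
  have hb := lapl_bound hρ₁ hρ₂ (s := σ + w * Complex.I) (by rw [hre]; exact hσ)
  have hle : |w| ≤ ‖(σ + w * Complex.I : ℂ)‖ := by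
    simpa using Complex.abs_im_le_norm (σ + w * Complex.I : ℂ)
  have hwpos : 0 < |w| := abs_pos.2 hw
  unfold lineBound
  split_ifs with h
  · refine hb.1.trans ?_
    gcongr ?_ * ?_
    exact Real.rpow_le_rpow_of_nonpos hwpos hle (by linarith)
  · refine hb.2.trans ?_
    gcongr ?_ * ?_
    exact Real.rpow_le_rpow_of_nonpos hwpos hle (by norm_num)

/-! ### Computation of the Laplace transform -/

/-- The sum of a series of functions with summable `L¹` norms is integrable. -/
lemma integrable_tsum_aux {α : Type*} [MeasurableSpace α] {ν : Measure α} {F : ℕ → α → ℝ}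
    {f : α → ℝ} (hfm : AEStronglyMeasurable f ν) (hF : ∀ k, Integrable (F k) ν)
    (hsum : Summable fun k => ∫ a, ‖F k a‖ ∂ν) (hf : ∀ᵐ a ∂ν, f a = ∑' k, F k a) :
    Integrable f ν := by
  refine ⟨hfm, ?_⟩
  unfold HasFiniteIntegral
  have h1 : ∫⁻ a, ‖f a‖ₑ ∂ν ≤ ∫⁻ a, ∑' k, ‖F k a‖ₑ ∂ν := by
    refine lintegral_mono_ae ?_
    filter_upwards [hf] with a ha
    rw [ha]
    exact enorm_tsum_le_tsum_enorm
  refine h1.trans_lt ?_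
  rw [lintegral_tsum fun k => (hF k).1.enorm]
  have h2 : ∀ k, ∫⁻ a, ‖F k a‖ₑ ∂ν = ENNReal.ofReal (∫ a, ‖F k a‖ ∂ν) := fun k => by
    rw [ofReal_integral_norm_eq_lintegral_enorm (hF k)]
  simp_rw [h2]
  rw [← ENNReal.ofReal_tsum_of_nonneg (fun k => integral_nonneg fun a => norm_nonneg _) hsum]
  exact ENNReal.ofReal_lt_top

lemma integrableOn_rpow_mul_exp {a r : ℝ} (ha : 0 < a) (hr : 0 < r) :
    IntegrableOn (fun t : ℝ => t ^ (a - 1) * Real.exp (-(r * t))) (Set.Ioi 0) := by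
  -- otherwise the integral would take its junk value `0`, but it is positive
  by_contra h
  have h1 := Real.integral_rpow_mul_exp_neg_mul_Ioi ha hr
  rw [integral_undef h] at h1
  have : 0 < (1 / r) ^ a * Real.Gamma a := by
    have := Real.Gamma_pos_of_pos ha
    positivity
  linarith

/-- With `q = s^(-ρ) < 1`, termwise integration gives `s^(-2) ∑ (ρk + 1) (-q)^k`. -/
lemma laplace_real {ρ : ℝ} (hρ₁ : 1 < ρ) {s : ℝ} (hs : 1 < s) :
    IntegrableOn (fun u : ℝ => u * ml ρ (-(u ^ ρ)) * Real.exp (-(s * u))) (Set.Ioi 0) ∧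
    ∫ u in Set.Ioi (0 : ℝ), u * ml ρ (-(u ^ ρ)) * Real.exp (-(s * u)) =
      s ^ (ρ - 2) * (s ^ ρ + 1 - ρ) / (s ^ ρ + 1) ^ 2 := by
  have hs0 : 0 < s := by linarith
  set c : ℕ → ℝ := fun k => (-1) ^ k / Real.Gamma (ρ * k + 1)
  set F : ℕ → ℝ → ℝ := fun k u => c k * (u ^ ((ρ * k + 2) - 1) * Real.exp (-(s * u))) with hF
  set q : ℝ := (1 / s) ^ ρ with hq
  have hq0 : 0 < q := by positivity
  have hq1 : q < 1 := Real.rpow_lt_one (by positivity) (by rw [div_lt_one hs0]; exact hs) (by linarith)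
  have hexp : ∀ k : ℕ, 0 < ρ * k + 2 := fun k => by positivity
  have hFint : ∀ k, IntegrableOn (F k) (Set.Ioi 0) := fun k =>
    (integrableOn_rpow_mul_exp (hexp k) hs0).const_mul _
  have hG : ∀ k : ℕ, ∫ u in Set.Ioi (0 : ℝ), u ^ ((ρ * k + 2) - 1) * Real.exp (-(s * u)) =
      (1 / s) ^ 2 * q ^ k * ((ρ * k + 1) * Real.Gamma (ρ * k + 1)) := fun k => by
    rw [Real.integral_rpow_mul_exp_neg_mul_Ioi (hexp k) hs0, ← Real.Gamma_add_one (by positivity),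
      Real.rpow_add (by positivity), Real.rpow_mul (by positivity), Real.rpow_natCast,
      Real.rpow_ofNat, hq, show ρ * k + 1 + 1 = ρ * k + 2 by ring]
    ring
  have hval : ∀ k, ∫ u in Set.Ioi (0 : ℝ), F k u =
      (1 / s) ^ 2 * ((-q) ^ k + ρ * (k * (-q) ^ k)) := fun k => by
    simp only [hF]
    rw [integral_const_mul, hG]
    have := (Gamma_mul_add_one_pos hρ₁ k).ne'
    simp only [c]
    rw [neg_pow q]
    field_simp
    ring
  have hnorm : ∀ k, ∫ u in Set.Ioi (0 : ℝ), ‖F k u‖ =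
      (1 / s) ^ 2 * (q ^ k + ρ * (k * q ^ k)) := fun k => by
    have hpos := Gamma_mul_add_one_pos hρ₁ k
    have : ∀ u ∈ Set.Ioi (0 : ℝ), ‖F k u‖ = (Real.Gamma (ρ * k + 1))⁻¹ *
        (u ^ ((ρ * k + 2) - 1) * Real.exp (-(s * u))) := fun u hu => by
      have hu : 0 < u := hu
      simp only [hF, c]
      rw [norm_mul, norm_div, norm_pow, norm_neg, norm_one, one_pow,
        Real.norm_of_nonneg hpos.le, Real.norm_of_nonneg (by positivity), one_div]
    rw [setIntegral_congr_fun measurableSet_Ioi this, integral_const_mul, hG]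
    field_simp
    ring
  have hqn : ‖q‖ < 1 := by rwa [Real.norm_of_nonneg hq0.le]
  have hqn' : ‖-q‖ < 1 := by rwa [norm_neg]
  have hsumm : Summable fun k => ∫ u in Set.Ioi (0 : ℝ), ‖F k u‖ := by
    simp_rw [hnorm]
    exact (((hasSum_geometric_of_norm_lt_one hqn).add
      ((hasSum_coe_mul_geometric_of_norm_lt_one hqn).mul_left ρ)).mul_left _).summable
  have htsum : ∀ u ∈ Set.Ioi (0 : ℝ),
      u * ml ρ (-(u ^ ρ)) * Real.exp (-(s * u)) = ∑' k, F k u := fun u hu => by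
    have hu : 0 < u := hu
    unfold ml
    rw [← tsum_mul_left, ← tsum_mul_right]
    refine tsum_congr fun k => ?_
    simp only [hF, c]
    have : ρ * k + 2 - 1 = ρ * k + 1 := by ring
    rw [this, Real.rpow_add_one hu.ne', Real.rpow_mul hu.le, Real.rpow_natCast, neg_pow]
    ring
  constructor
  · refine integrable_tsum_aux ?_ hFint hsumm ?_
    · have := continuous_ml hρ₁
      have h2 : Continuous fun u : ℝ => u ^ ρ := Real.continuous_rpow_const (by linarith)
      exact Continuous.aestronglyMeasurable (by fun_prop)
    · exact (ae_restrict_iff' measurableSet_Ioi).2 (Filter.Eventually.of_forall htsum)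
  · rw [setIntegral_congr_fun measurableSet_Ioi htsum]
    have h1 := hasSum_integral_of_summable_integral_norm hFint hsumm
    simp_rw [hval] at h1
    have h2 := ((hasSum_geometric_of_norm_lt_one hqn').add
      ((hasSum_coe_mul_geometric_of_norm_lt_one hqn').mul_left ρ)).mul_left ((1 / s) ^ 2)
    rw [h1.unique h2, hq, Real.rpow_sub hs0, Real.div_rpow zero_le_one hs0.le, Real.one_rpow,
      Real.rpow_ofNat]
    have hR : 0 < s ^ ρ := by positivity
    have : 1 - -(1 / s ^ ρ) = (s ^ ρ + 1) / s ^ ρ := by field_simp; ring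
    rw [this]
    field_simp
    ring

/-- A Laplace transform is holomorphic to the right of an abscissa `σ` of absolute convergence: near
`s` the factor `u` produced by differentiation is absorbed by `e^(-εu)`. -/
lemma laplace_differentiableAt {f : ℝ → ℂ} {σ : ℝ}
    (hf : IntegrableOn (fun u : ℝ => f u * Complex.exp (-(σ * u))) (Set.Ioi 0))
    {s : ℂ} (hs : σ < s.re) :
    DifferentiableAt ℂ (fun z : ℂ => ∫ u in Set.Ioi (0 : ℝ), f u * Complex.exp (-(z * u))) s := by
  -- half of the available room, so that `e^(-εu)` is left over on the whole ball
  set ε := (s.re - σ) / 2 with hε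
  have hεpos : 0 < ε := by rw [hε]; linarith
  have hre : ∀ z ∈ Metric.ball s ε, σ + ε < z.re := fun z hz => by
    have h1 := Complex.abs_re_le_norm (z - s)
    rw [Metric.mem_ball, dist_eq_norm] at hz
    rw [Complex.sub_re] at h1
    have := (abs_lt.1 (h1.trans_lt hz)).1
    linarith
  have hmul : ∀ z : ℂ, (fun u : ℝ => f u * Complex.exp (-(z * u))) =
      fun u : ℝ => Complex.exp (-((z - σ) * u)) * (f u * Complex.exp (-(σ * u))) := fun z => by
    funext u
    rw [mul_left_comm, ← Complex.exp_add]
    ring_nf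
  have hmeas : ∀ z : ℂ, AEStronglyMeasurable (fun u : ℝ => f u * Complex.exp (-(z * u)))
      (volume.restrict (Set.Ioi 0)) := fun z => by
    rw [hmul]
    exact AEStronglyMeasurable.mul (Continuous.aestronglyMeasurable (by fun_prop)) hf.1
  refine (hasDerivAt_integral_of_dominated_loc_of_deriv_le (Metric.ball_mem_nhds s hεpos)
    (F' := fun z u => f u * (Complex.exp (-(z * u)) * (-u)))
    (bound := fun u => ε⁻¹ * ‖f u * Complex.exp (-(σ * u))‖) (Filter.Eventually.of_forall hmeas)
    ?_ ?_ ?_ (hf.norm.const_mul _) ?_).2.differentiableAt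
  · refine hf.norm.mono' (hmeas s) ?_
    refine (ae_restrict_iff' measurableSet_Ioi).2 (Filter.Eventually.of_forall fun u hu => ?_)
    have hu : 0 < u := hu
    rw [norm_mul, norm_mul, Complex.norm_exp, Complex.norm_exp]
    simp only [Complex.neg_re, Complex.mul_re, Complex.ofReal_re, Complex.ofReal_im, mul_zero,
      sub_zero]
    gcongr
  · have h := (hmeas s).mul (Continuous.aestronglyMeasurable
      (f := fun u : ℝ => -(u : ℂ)) (by fun_prop))
    refine h.congr (Filter.Eventually.of_forall fun u => ?_)
    simp [mul_assoc]
  · refine (ae_restrict_iff' measurableSet_Ioi).2 (Filter.Eventually.of_forall fun u hu z hz => ?_)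
    have hu : 0 < u := hu
    rw [norm_mul, norm_mul, norm_mul, Complex.norm_exp, Complex.norm_exp, norm_neg,
      Complex.norm_real, Real.norm_of_nonneg hu.le]
    simp only [Complex.neg_re, Complex.mul_re, Complex.ofReal_re, Complex.ofReal_im, mul_zero,
      sub_zero]
    have h1 : u ≤ ε⁻¹ * Real.exp (ε * u) := by
      rw [inv_mul_eq_div, le_div_iff₀ hεpos, mul_comm]
      linarith [Real.add_one_le_exp (ε * u)]
    have h2 : Real.exp (-(z.re * u)) ≤ Real.exp (-(σ * u)) * Real.exp (-(ε * u)) := by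
      rw [← Real.exp_add]
      apply Real.exp_le_exp.2
      nlinarith [hre z hz]
    calc ‖f u‖ * (Real.exp (-(z.re * u)) * u)
        ≤ ‖f u‖ * ((Real.exp (-(σ * u)) * Real.exp (-(ε * u))) * (ε⁻¹ * Real.exp (ε * u))) := by
          gcongr
      _ = ε⁻¹ * (‖f u‖ * Real.exp (-(σ * u))) * (Real.exp (-(ε * u)) * Real.exp (ε * u)) := by ring
      _ = ε⁻¹ * (‖f u‖ * Real.exp (-(σ * u))) := by rw [← Real.exp_add]; simp
  · refine Filter.Eventually.of_forall fun u z _ => ?_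
    have h : HasDerivAt (fun z : ℂ => -(z * u)) (-(u : ℂ)) z := by
      have h := ((hasDerivAt_id z).mul_const (u : ℂ)).fun_neg
      rwa [one_mul] at h
    exact (h.cexp).const_mul _

/-- Both sides are holomorphic on `Re s > 1` and agree on the real axis. -/
lemma laplace_complex {ρ : ℝ} (hρ₁ : 1 < ρ) (hρ₂ : ρ < 2) {s : ℂ} (hs : 1 < s.re) :
    ∫ u in Set.Ioi (0 : ℝ), ((u * ml ρ (-(u ^ ρ)) : ℝ) : ℂ) * Complex.exp (-(s * u)) =
      lapl ρ s := by
  set U : Set ℂ := {z | 1 < z.re} with hU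
  have hUo : IsOpen U := isOpen_lt continuous_const Complex.continuous_re
  have hint : ∀ σ : ℝ, 1 < σ → IntegrableOn (fun u : ℝ =>
      ((u * ml ρ (-(u ^ ρ)) : ℝ) : ℂ) * Complex.exp (-(σ * u))) (Set.Ioi 0) := fun σ hσ => by
    have h := (laplace_real hρ₁ hσ).1.ofReal (𝕜 := ℂ)
    refine h.congr (Filter.Eventually.of_forall fun u => ?_)
    simp
  have hd1 : DifferentiableOn ℂ (fun z : ℂ => ∫ u in Set.Ioi (0 : ℝ),
      ((u * ml ρ (-(u ^ ρ)) : ℝ) : ℂ) * Complex.exp (-(z * u))) U := fun z hz => by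
    have hz : 1 < z.re := hz
    exact (laplace_differentiableAt (hint ((1 + z.re) / 2) (by linarith))
      (by linarith)).differentiableWithinAt
  have hd2 : DifferentiableOn ℂ (lapl ρ) U := fun z hz =>
    (lapl_differentiableAt hρ₁ hρ₂ (zero_lt_one.trans hz)).differentiableWithinAt
  have hconv : IsPreconnected U :=
    (convex_halfSpace_re_gt 1).isPreconnected
  have h2U : (2 : ℂ) ∈ U := by simp [hU]
  have hreal : ∀ σ : ℝ, 1 < σ → ∫ u in Set.Ioi (0 : ℝ),
      ((u * ml ρ (-(u ^ ρ)) : ℝ) : ℂ) * Complex.exp (-((σ : ℂ) * u)) = lapl ρ σ := fun σ hσ => by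
    have hσ0 : 0 ≤ σ := by linarith
    have h := (laplace_real hρ₁ hσ).2
    have h' := congrArg (fun x : ℝ => (x : ℂ)) h
    simp only [← integral_complex_ofReal] at h'
    unfold lapl
    push_cast [Complex.ofReal_cpow hσ0] at h' ⊢
    exact h'
  refine (hd1.analyticOnNhd hUo).eqOn_of_preconnected_of_frequently_eq (hd2.analyticOnNhd hUo)
    hconv h2U ?_ hs
  -- the real numbers `σ > 2` accumulate at `2`
  have htend : Filter.Tendsto (fun σ : ℝ => (σ : ℂ)) (nhdsWithin 2 (Set.Ioi 2))
      (nhdsWithin 2 {2}ᶜ) := by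
    refine tendsto_nhdsWithin_of_tendsto_nhds_of_eventually_within _ ?_ ?_
    · exact (Complex.continuous_ofReal.tendsto' 2 2 (by simp)).mono_left nhdsWithin_le_nhds
    · filter_upwards [self_mem_nhdsWithin] with σ hσ
      have hσ : 2 < σ := hσ
      simp only [Set.mem_compl_iff, Set.mem_singleton_iff]
      intro h
      have : σ = 2 := by exact_mod_cast h
      linarith
  refine htend.frequently (Filter.Eventually.frequently ?_)
  filter_upwards [self_mem_nhdsWithin] with σ hσ
  have hσ : 2 < σ := hσ
  exact hreal σ (by linarith)

/-! ### Inversion and shift of the contour -/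

lemma line_continuous {ρ : ℝ} (hρ₁ : 1 < ρ) (hρ₂ : ρ < 2) {σ : ℝ} (hσ : 0 < σ) (u : ℝ) :
    Continuous fun w : ℝ =>
      Complex.exp ((σ + w * Complex.I) * u) * lapl ρ (σ + w * Complex.I) := by
  refine Continuous.mul (by fun_prop) (continuous_iff_continuousAt.2 fun w => ?_)
  have h : ContinuousAt (lapl ρ) (σ + w * Complex.I) :=
    (lapl_differentiableAt hρ₁ hρ₂ (by simpa using hσ)).continuousAt
  exact ContinuousAt.comp (f := fun w : ℝ => (σ + w * Complex.I : ℂ)) h (by fun_prop)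

lemma line_bound {ρ : ℝ} (hρ₁ : 1 < ρ) (hρ₂ : ρ < 2) {σ : ℝ} (hσ : 0 < σ) (u : ℝ) {w : ℝ}
    (hw : w ≠ 0) :
    ‖Complex.exp ((σ + w * Complex.I) * u) * lapl ρ (σ + w * Complex.I)‖ ≤
      Real.exp (σ * u) * (2 / (1 + Real.cos (ρ * (Real.pi / 2))) * lineBound ρ w) := by
  rw [norm_mul, Complex.norm_exp]
  have : ((σ + w * Complex.I) * u : ℂ).re = σ * u := by simp
  rw [this]
  have := lapl_line_bound hρ₁ hρ₂ hσ hw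
  gcongr

lemma line_bound_ae {ρ : ℝ} (hρ₁ : 1 < ρ) (hρ₂ : ρ < 2) {σ : ℝ} (hσ : 0 < σ) (u : ℝ) :
    ∀ᵐ w : ℝ, ‖Complex.exp ((σ + w * Complex.I) * u) * lapl ρ (σ + w * Complex.I)‖ ≤
      Real.exp (σ * u) * (2 / (1 + Real.cos (ρ * (Real.pi / 2))) * lineBound ρ w) := by
  filter_upwards [compl_mem_ae_iff.2 (measure_singleton (0 : ℝ))] with w hw
  exact line_bound hρ₁ hρ₂ hσ u hw

lemma line_integrable {ρ : ℝ} (hρ₁ : 1 < ρ) (hρ₂ : ρ < 2) {σ : ℝ} (hσ : 0 < σ) (u : ℝ) :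
    Integrable fun w : ℝ =>
      Complex.exp ((σ + w * Complex.I) * u) * lapl ρ (σ + w * Complex.I) :=
  (((lineBound_integrable hρ₁).const_mul _).const_mul _).mono'
    (line_continuous hρ₁ hρ₂ hσ u).aestronglyMeasurable (line_bound_ae hρ₁ hρ₂ hσ u)

lemma line_norm_le {ρ : ℝ} (hρ₁ : 1 < ρ) (hρ₂ : ρ < 2) {σ : ℝ} (hσ : 0 < σ) (u : ℝ) :
    ‖∫ w : ℝ, Complex.exp ((σ + w * Complex.I) * u) * lapl ρ (σ + w * Complex.I)‖ ≤
      Real.exp (σ * u) *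
        (2 / (1 + Real.cos (ρ * (Real.pi / 2))) * ∫ w, lineBound ρ w) := by
  rw [← integral_const_mul, ← integral_const_mul]
  exact norm_integral_le_of_norm_le (((lineBound_integrable hρ₁).const_mul _).const_mul _)
    (line_bound_ae hρ₁ hρ₂ hσ u)

/-- The horizontal sides of the rectangle, at height `εR` with `ε = ±1`, contribute `O(R^(-2))`. -/
lemma horizontal_tendsto {ρ : ℝ} (hρ₁ : 1 < ρ) (hρ₂ : ρ < 2) {σ τ : ℝ} (hσ : 0 < σ)
    (hστ : σ ≤ τ) {u : ℝ} (hu : 0 ≤ u) {ε : ℝ} (hε : |ε| = 1) :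
    Filter.Tendsto (fun R : ℝ => ∫ x in σ..τ,
      Complex.exp ((x + (ε * R : ℝ) * Complex.I) * u) * lapl ρ (x + (ε * R : ℝ) * Complex.I))
      Filter.atTop (𝓝 0) := by
  set c := 2 / (1 + Real.cos (ρ * (Real.pi / 2))) with hc
  have hcpos : 0 < c := div_pos two_pos (one_add_cos_pos hρ₁ hρ₂)
  have hlim : Filter.Tendsto (fun R : ℝ => (Real.exp (τ * u) * (c * R ^ (-2 : ℝ))) * |τ - σ|)
      Filter.atTop (𝓝 0) := by
    have := ((tendsto_rpow_neg_atTop (y := 2) two_pos).const_mul c).const_mul (Real.exp (τ * u))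
    simpa using this.mul_const |τ - σ|
  refine squeeze_zero_norm' ?_ hlim
  filter_upwards [Filter.eventually_gt_atTop 1] with R hR
  refine intervalIntegral.norm_integral_le_of_norm_le_const fun x hx => ?_
  rw [Set.uIoc_of_le hστ] at hx
  have hR0 : 0 < R := by linarith
  have habs : |ε * R| = R := by rw [abs_mul, hε, one_mul, abs_of_pos hR0]
  have hne : ε * R ≠ 0 := by rw [← abs_pos, habs]; exact hR0
  refine (line_bound hρ₁ hρ₂ (hσ.trans hx.1) u hne).trans ?_
  have : lineBound ρ (ε * R) = R ^ (-2 : ℝ) := by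
    simp only [lineBound, habs, not_le.2 hR, if_false]
  rw [this, ← hc]
  have := hx.2
  gcongr

/-- Cauchy's theorem on the rectangle `[σ, τ] × [-R, R]`, with `R → ∞`. -/
lemma line_shift {ρ : ℝ} (hρ₁ : 1 < ρ) (hρ₂ : ρ < 2) {σ τ : ℝ} (hσ : 0 < σ)
    (hστ : σ ≤ τ) {u : ℝ} (hu : 0 ≤ u) :
    ∫ w : ℝ, Complex.exp ((σ + w * Complex.I) * u) * lapl ρ (σ + w * Complex.I) =
    ∫ w : ℝ, Complex.exp ((τ + w * Complex.I) * u) * lapl ρ (τ + w * Complex.I) := by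
  set Φ : ℂ → ℂ := fun s => Complex.exp (s * u) * lapl ρ s with hΦ
  have hτ : 0 < τ := hσ.trans_le hστ
  have hrect : ∀ R : ℝ,
      (∫ x in σ..τ, Φ (x + ((-1) * R : ℝ) * Complex.I)) -
        (∫ x in σ..τ, Φ (x + (1 * R : ℝ) * Complex.I)) +
      Complex.I • (∫ y in (-R)..R, Φ (τ + y * Complex.I)) -
      Complex.I • (∫ y in (-R)..R, Φ (σ + y * Complex.I)) = 0 := fun R => by
    have h := Complex.integral_boundary_rect_eq_zero_of_differentiableOn Φ
      ⟨σ, -R⟩ ⟨τ, R⟩ (fun s hs => by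
        have hs1 : s.re ∈ Set.uIcc σ τ := hs.1
        rw [Set.uIcc_of_le hστ] at hs1
        have : DifferentiableAt ℂ (lapl ρ) s :=
          lapl_differentiableAt hρ₁ hρ₂ (hσ.trans_le hs1.1)
        exact (DifferentiableAt.mul (by fun_prop) this).differentiableWithinAt)
    simpa using h
  have h1 := horizontal_tendsto hρ₁ hρ₂ hσ hστ hu (ε := -1) (by simp)
  have h2 := horizontal_tendsto hρ₁ hρ₂ hσ hστ hu (ε := 1) (by simp)
  have h3 := intervalIntegral_tendsto_integral (line_integrable hρ₁ hρ₂ hσ u)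
    Filter.tendsto_neg_atTop_atBot Filter.tendsto_id
  have h4 := intervalIntegral_tendsto_integral (line_integrable hρ₁ hρ₂ hτ u)
    Filter.tendsto_neg_atTop_atBot Filter.tendsto_id
  have h5 := ((h1.sub h2).add (h4.const_smul Complex.I)).sub (h3.const_smul Complex.I)
  have h6 := tendsto_nhds_unique (h5.congr hrect) tendsto_const_nhds
  rw [sub_zero, zero_add, sub_eq_zero] at h6
  exact (smul_right_injective ℂ Complex.I_ne_zero h6).symm

/-- Fourier inversion for `u ↦ u E_ρ(-u^ρ) e^(-2u)` extended by zero to the negative half-line. -/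
lemma inversion {ρ : ℝ} (hρ₁ : 1 < ρ) (hρ₂ : ρ < 2) {u : ℝ} (hu : 0 < u) :
    ((u * ml ρ (-(u ^ ρ)) : ℝ) : ℂ) = ((2 * Real.pi)⁻¹ : ℝ) •
      ∫ w : ℝ, Complex.exp (((2 : ℝ) + w * Complex.I) * u) * lapl ρ ((2 : ℝ) + w * Complex.I) := by
  have hpi := Real.pi_pos
  set g : ℝ → ℂ := fun u => ((u * ml ρ (-(u ^ ρ)) : ℝ) : ℂ) * Complex.exp (-(2 * u)) with hg
  set v : ℝ → ℂ := (Set.Ioi 0).indicator g with hv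
  have hgc : Continuous g := by
    have := continuous_ml hρ₁
    have h2 : Continuous fun u : ℝ => u ^ ρ := Real.continuous_rpow_const (by linarith)
    fun_prop
  have hvint : Integrable v := by
    rw [hv, integrable_indicator_iff measurableSet_Ioi]
    have h := (laplace_real hρ₁ (s := 2) (by norm_num)).1.ofReal (𝕜 := ℂ)
    refine h.congr (Filter.Eventually.of_forall fun u => ?_)
    simp [hg]
  have hF : 𝓕 v = fun w : ℝ => lapl ρ ((2 : ℝ) + (2 * Real.pi * w : ℝ) * Complex.I) := by
    funext w
    rw [Real.fourier_real_eq_integral_exp_smul,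
      ← laplace_complex hρ₁ hρ₂ (by simp), ← integral_indicator measurableSet_Ioi]
    congr 1
    funext t
    by_cases ht : t ∈ Set.Ioi (0 : ℝ)
    · simp only [hv, hg, Set.indicator_of_mem ht, smul_eq_mul]
      rw [mul_left_comm, ← Complex.exp_add]
      congr 2
      push_cast
      ring
    · simp [hv, Set.indicator_of_notMem ht]
  have hFint : Integrable (𝓕 v) := by
    rw [hF]
    have h := (line_integrable hρ₁ hρ₂ (σ := 2) two_pos 0).comp_mul_left'
      (R := 2 * Real.pi) (by positivity)
    simpa using h
  have hcont : ContinuousAt v u := by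
    refine hgc.continuousAt.congr ?_
    filter_upwards [Ioi_mem_nhds hu] with t ht
    exact (Set.indicator_of_mem ht g).symm
  have hinv := hvint.fourierInv_fourier_eq hFint hcont
  rw [hF, Real.fourierInv_eq', hv, Set.indicator_of_mem (show u ∈ Set.Ioi (0:ℝ) from hu)] at hinv
  have h1 : ((u * ml ρ (-(u ^ ρ)) : ℝ) : ℂ) = Complex.exp (2 * u) * g u := by
    simp only [hg]
    rw [mul_left_comm, ← Complex.exp_add]
    simp
  rw [h1, ← hinv, ← integral_const_mul]
  have h2 := Measure.integral_comp_mul_left (fun w : ℝ =>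
    Complex.exp (((2 : ℝ) + w * Complex.I) * u) * lapl ρ ((2 : ℝ) + w * Complex.I)) (2 * Real.pi)
  rw [abs_of_pos (by positivity)] at h2
  rw [← h2]
  congr 1
  funext w
  rw [smul_eq_mul, ← mul_assoc, ← Complex.exp_add]
  congr 2
  simp
  ring

/-- `E_ρ(-u^ρ) = O(1/u)`. The constant is uniform because the contour may be taken at
`Re s = 1/(1+u)`, where `|e^(su)| ≤ e`. -/
lemma exists_mul_ml_le {ρ : ℝ} (hρ₁ : 1 < ρ) (hρ₂ : ρ < 2) :
    ∃ M : ℝ, 0 ≤ M ∧ ∀ u : ℝ, 0 < u → u * |ml ρ (-(u ^ ρ))| ≤ M := by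
  have hpi := Real.pi_pos
  set K := 2 / (1 + Real.cos (ρ * (Real.pi / 2))) * ∫ w, lineBound ρ w with hK
  have hb : ∀ u : ℝ, 0 < u → u * |ml ρ (-(u ^ ρ))| ≤ (2 * Real.pi)⁻¹ * (Real.exp 1 * K) := by
    intro u hu
    have h1 := congrArg norm (inversion hρ₁ hρ₂ hu)
    -- integrate over `Re s = 1/(1+u)` instead of `Re s = 2`
    have hσ : 0 < 1 / (1 + u) := by positivity
    have hσ1 : 1 / (1 + u) ≤ 2 := by rw [div_le_iff₀ (by positivity)]; linarith
    rw [Complex.norm_real, norm_smul, ← line_shift hρ₁ hρ₂ hσ hσ1 hu.le, norm_mul,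
      Real.norm_of_nonneg hu.le, Real.norm_eq_abs,
      Real.norm_of_nonneg (by positivity : 0 ≤ (2 * Real.pi)⁻¹)] at h1
    rw [h1]
    have h2 := line_norm_le hρ₁ hρ₂ hσ u
    rw [← hK] at h2
    have h3 : Real.exp (1 / (1 + u) * u) ≤ Real.exp 1 := by
      apply Real.exp_le_exp.2
      rw [div_mul_eq_mul_div, div_le_iff₀ (by positivity)]; linarith
    have hK0 : 0 ≤ K := by
      have := (norm_nonneg _).trans h2
      exact nonneg_of_mul_nonneg_right this (Real.exp_pos _)
    refine mul_le_mul_of_nonneg_left (h2.trans ?_) (by positivity)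
    gcongr
  exact ⟨_, (mul_nonneg zero_le_one (abs_nonneg _)).trans (hb 1 one_pos), hb⟩

/-- Interpolation between boundedness of `E_ρ(-y)` for `y ≤ 1` and `O(y^(-1/ρ))` for `y ≥ 1`. -/
lemma exists_ml_le {ρ : ℝ} (hρ₁ : 1 < ρ) (hρ₂ : ρ < 2) {a : ℝ} (ha : 0 ≤ a) (haρ : a ≤ 1 / ρ) :
    ∃ C : ℝ, 0 ≤ C ∧ ∀ y : ℝ, 0 < y → |ml ρ (-y)| ≤ C * y ^ (-a) := by
  obtain ⟨M, hM0, hM⟩ := exists_mul_ml_le hρ₁ hρ₂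
  refine ⟨M + Real.exp 1, by positivity, fun y hy => ?_⟩
  have hya : 0 < y ^ (-a) := by positivity
  rcases le_total y 1 with h | h
  · have h1 := abs_ml_le hρ₁ (-y)
    rw [abs_neg, abs_of_pos hy] at h1
    have h2 : Real.exp y ≤ Real.exp 1 := Real.exp_le_exp.2 h
    have h3 : 1 ≤ y ^ (-a) := Real.one_le_rpow_of_pos_of_le_one_of_nonpos hy h (by linarith)
    nlinarith [Real.exp_pos 1]
  · have hu : 0 < y ^ (1 / ρ) := by positivity
    have h1 := hM _ hu
    rw [← Real.rpow_mul hy.le, one_div_mul_cancel (by linarith), Real.rpow_one] at h1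
    have h2 : y ^ a ≤ y ^ (1 / ρ) := Real.rpow_le_rpow_of_exponent_le h haρ
    rw [Real.rpow_neg hy.le, ← div_eq_mul_inv, le_div_iff₀ (by positivity)]
    have := mul_le_mul_of_nonneg_right h2 (abs_nonneg (ml ρ (-y)))
    nlinarith [Real.exp_pos 1]

/-! ### The generalized function as a Gamma average -/

/-- Log-convexity of `Γ` at `z + 1 = (1 - 1/ρ) z + (1/ρ) (z + ρ)`. -/
lemma rpow_mul_Gamma_le {ρ : ℝ} (hρ : 1 < ρ) {z : ℝ} (hz : 0 < z) :
    z ^ ρ * Real.Gamma z ≤ Real.Gamma (z + ρ) := by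
  have hρ0 : 0 < ρ := by linarith
  have hb1 : 1 / ρ < 1 := by rw [div_lt_one hρ0]; exact hρ
  have hG := Real.Gamma_pos_of_pos hz
  have hG2 : 0 < Real.Gamma (z + ρ) := Real.Gamma_pos_of_pos (by linarith)
  have h := Real.Gamma_mul_add_mul_le_rpow_Gamma_mul_rpow_Gamma hz (t := z + ρ) (by linarith)
    (a := 1 - 1 / ρ) (b := 1 / ρ) (by linarith) (by positivity) (by ring)
  have he : (1 - 1 / ρ) * z + 1 / ρ * (z + ρ) = z + 1 := by field_simp; ring
  rw [he, Real.Gamma_add_one hz.ne', Real.rpow_sub hG, Real.rpow_one] at h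
  have h1 : z * Real.Gamma z ^ (1 / ρ) ≤ Real.Gamma (z + ρ) ^ (1 / ρ) := by
    have hp : 0 < Real.Gamma z ^ (1 / ρ) := by positivity
    rw [div_mul_eq_mul_div, le_div_iff₀ hp] at h
    have h' : Real.Gamma z * (z * Real.Gamma z ^ (1 / ρ)) ≤
        Real.Gamma z * Real.Gamma (z + ρ) ^ (1 / ρ) := by linarith
    exact le_of_mul_le_mul_left h' hG
  have h2 := Real.rpow_le_rpow (by positivity) h1 hρ0.le
  rwa [Real.mul_rpow hz.le (by positivity), ← Real.rpow_mul hG.le, ← Real.rpow_mul hG2.le,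
    one_div_mul_cancel hρ0.ne', Real.rpow_one, Real.rpow_one] at h2

/-- The series of `G_ρ` converges everywhere: by `rpow_mul_Gamma_le` the ratio of consecutive terms is
`O(k^(1-ρ))`. -/
lemma summable_gen {ρ μ : ℝ} (hρ : 1 < ρ) (hμ : 0 < μ) {x : ℝ} (hx : 0 < x) :
    Summable fun k : ℕ => Real.Gamma (μ + k) / Real.Gamma (ρ * k + 1) * x ^ k := by
  have hpos : ∀ k : ℕ, 0 < Real.Gamma (μ + k) / Real.Gamma (ρ * k + 1) * x ^ k := fun k => by
    have h1 := Gamma_mul_add_one_pos hρ k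
    have h2 : 0 < Real.Gamma (μ + k) := Real.Gamma_pos_of_pos (by positivity)
    positivity
  refine summable_of_ratio_test_tendsto_lt_one (l := 0) one_pos
    (Filter.Eventually.of_forall fun k => (hpos k).ne') ?_
  have hlim : Filter.Tendsto (fun k : ℕ => x * (μ + 1) * ((k + 1 : ℕ) : ℝ) ^ (-(ρ - 1)))
      Filter.atTop (𝓝 0) := by
    have h := ((tendsto_rpow_neg_atTop (y := ρ - 1) (by linarith)).comp
      (tendsto_natCast_atTop_atTop (R := ℝ))).comp (Filter.tendsto_add_atTop_nat 1)
    simpa [Function.comp_def] using h.const_mul (x * (μ + 1))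
  refine squeeze_zero (fun k => by positivity) (fun k => ?_) hlim
  rw [Real.norm_of_nonneg (hpos _).le, Real.norm_of_nonneg (hpos _).le, div_le_iff₀ (hpos k)]
  have hz : 0 < ρ * k + 1 := by positivity
  have hG := Gamma_mul_add_one_pos hρ k
  have hμk : 0 < μ + k := by positivity
  have hGμ : 0 < Real.Gamma (μ + k) := Real.Gamma_pos_of_pos hμk
  have h1 := rpow_mul_Gamma_le hρ hz
  have h2 : ρ * k + 1 + ρ = ρ * ((k + 1 : ℕ) : ℝ) + 1 := by push_cast; ring
  have h3 : μ + ((k + 1 : ℕ) : ℝ) = (μ + k) + 1 := by push_cast; ring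
  rw [h2] at h1
  rw [h3, Real.Gamma_add_one hμk.ne']
  have hk1 : (0 : ℝ) < ((k + 1 : ℕ) : ℝ) := by positivity
  have h4 : ((k + 1 : ℕ) : ℝ) ^ ρ ≤ (ρ * k + 1) ^ ρ := by
    apply Real.rpow_le_rpow hk1.le _ (by linarith)
    push_cast
    nlinarith [(Nat.cast_nonneg k : (0 : ℝ) ≤ k)]
  have h5 : ((k + 1 : ℕ) : ℝ) ^ (-(ρ - 1)) = ((k + 1 : ℕ) : ℝ) / ((k + 1 : ℕ) : ℝ) ^ ρ := by
    rw [show -(ρ - 1) = 1 - ρ by ring, Real.rpow_sub hk1, Real.rpow_one]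
  have h6 : μ + k ≤ (μ + 1) * ((k + 1 : ℕ) : ℝ) := by
    push_cast
    nlinarith [(Nat.cast_nonneg k : (0 : ℝ) ≤ k)]
  have hkρ : 0 < ((k + 1 : ℕ) : ℝ) ^ ρ := by positivity
  have h7 : ((k + 1 : ℕ) : ℝ) ^ ρ * Real.Gamma (ρ * k + 1) ≤
      Real.Gamma (ρ * ((k + 1 : ℕ) : ℝ) + 1) :=
    (mul_le_mul_of_nonneg_right h4 hG.le).trans h1
  calc (μ + k) * Real.Gamma (μ + k) / Real.Gamma (ρ * ((k + 1 : ℕ) : ℝ) + 1) * x ^ (k + 1)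
      ≤ ((μ + 1) * ((k + 1 : ℕ) : ℝ)) * Real.Gamma (μ + k) /
        (((k + 1 : ℕ) : ℝ) ^ ρ * Real.Gamma (ρ * k + 1)) * x ^ (k + 1) := by gcongr
    _ = _ := by rw [h5, pow_succ]; field_simp

lemma continuous_genML {ρ μ : ℝ} (hρ : 1 < ρ) (hμ : 0 < μ) : Continuous (genML ρ μ) := by
  rw [continuous_iff_continuousAt]
  intro y
  have h : ContinuousOn (genML ρ μ) (Metric.ball 0 (|y| + 1)) := by
    apply continuousOn_tsum (u := fun k : ℕ =>
      (Real.Gamma μ)⁻¹ * (Real.Gamma (μ + k) / Real.Gamma (ρ * k + 1) * (|y| + 1) ^ k))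
    · intro k
      fun_prop
    · exact (summable_gen hρ hμ (by positivity)).mul_left _
    · intro k x hx
      have hx' : |x| ≤ |y| + 1 := by simpa using (Metric.mem_ball.1 hx).le
      have h1 := Gamma_mul_add_one_pos hρ k
      have h2 : 0 < Real.Gamma (μ + k) := Real.Gamma_pos_of_pos (by positivity)
      have h3 := Real.Gamma_pos_of_pos hμ
      rw [norm_mul, norm_pow, Real.norm_of_nonneg (by positivity), Real.norm_eq_abs]
      calc _ ≤ Real.Gamma (μ + k) / Real.Gamma μ / Real.Gamma (ρ * k + 1) * (|y| + 1) ^ k := by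
            gcongr
        _ = _ := by field_simp
  exact h.continuousAt (Metric.isOpen_ball.mem_nhds (by simp))

lemma genML_eq_integral {ρ μ : ℝ} (hρ : 1 < ρ) (hμ : 0 < μ) {x : ℝ} (hx : 0 < x) :
    genML ρ μ (-x) = (Real.Gamma μ)⁻¹ *
      ∫ t in Set.Ioi (0 : ℝ), t ^ (μ - 1) * Real.exp (-t) * ml ρ (-(x * t)) := by
  set F : ℕ → ℝ → ℝ := fun k t =>
    ((-x) ^ k / Real.Gamma (ρ * k + 1)) * (t ^ ((μ + k) - 1) * Real.exp (-(1 * t))) with hF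
  have hμk : ∀ k : ℕ, 0 < μ + k := fun k => by positivity
  have hG : ∀ k : ℕ, ∫ t in Set.Ioi (0 : ℝ), t ^ ((μ + k) - 1) * Real.exp (-(1 * t)) =
      Real.Gamma (μ + k) := fun k => by
    rw [Real.integral_rpow_mul_exp_neg_mul_Ioi (hμk k) one_pos]; simp
  have hFint : ∀ k, IntegrableOn (F k) (Set.Ioi 0) := fun k =>
    (integrableOn_rpow_mul_exp (hμk k) one_pos).const_mul _
  have hnorm : ∀ k, ∫ t in Set.Ioi (0 : ℝ), ‖F k t‖ =
      Real.Gamma (μ + k) / Real.Gamma (ρ * k + 1) * x ^ k := fun k => by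
    have h1 := Gamma_mul_add_one_pos hρ k
    have : ∀ t ∈ Set.Ioi (0 : ℝ), ‖F k t‖ = (x ^ k / Real.Gamma (ρ * k + 1)) *
        (t ^ ((μ + k) - 1) * Real.exp (-(1 * t))) := fun t ht => by
      have ht : 0 < t := ht
      simp only [hF]
      rw [norm_mul, norm_div, norm_pow, norm_neg, Real.norm_of_nonneg hx.le,
        Real.norm_of_nonneg h1.le, Real.norm_of_nonneg (by positivity)]
    rw [setIntegral_congr_fun measurableSet_Ioi this, integral_const_mul, hG]
    ring
  have hsumm : Summable fun k => ∫ t in Set.Ioi (0 : ℝ), ‖F k t‖ := by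
    simp_rw [hnorm]
    exact summable_gen hρ hμ hx
  have htsum : ∀ t ∈ Set.Ioi (0 : ℝ),
      t ^ (μ - 1) * Real.exp (-t) * ml ρ (-(x * t)) = ∑' k, F k t := fun t ht => by
    have ht : 0 < t := ht
    unfold ml
    rw [← tsum_mul_left]
    refine tsum_congr fun k => ?_
    simp only [hF]
    rw [show μ + k - 1 = (μ - 1) + k by ring, Real.rpow_add ht, Real.rpow_natCast, ← neg_mul,
      mul_pow, one_mul]
    ring
  rw [setIntegral_congr_fun measurableSet_Ioi htsum,
    ← integral_tsum_of_summable_integral_norm hFint hsumm, ← tsum_mul_left]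
  unfold genML
  refine tsum_congr fun k => ?_
  simp only [hF]
  rw [integral_const_mul, hG]
  ring

lemma exists_genML_le {ρ μ : ℝ} (hρ₁ : 1 < ρ) (hρ₂ : ρ < 2) {a : ℝ} (ha : 0 ≤ a)
    (haρ : a ≤ 1 / ρ) (haμ : a < μ) :
    ∃ C : ℝ, 0 ≤ C ∧ ∀ x : ℝ, 0 < x → |genML ρ μ (-x)| ≤ C * x ^ (-a) := by
  obtain ⟨C, hC0, hC⟩ := exists_ml_le hρ₁ hρ₂ ha haρ
  have hμ : 0 < μ := by linarith
  have hΓ := Real.Gamma_pos_of_pos hμ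
  have hΓ2 : 0 < Real.Gamma (μ - a) := Real.Gamma_pos_of_pos (by linarith)
  refine ⟨(Real.Gamma μ)⁻¹ * (C * Real.Gamma (μ - a)), by positivity, fun x hx => ?_⟩
  rw [genML_eq_integral hρ₁ hμ hx, abs_mul, abs_of_pos (inv_pos.2 hΓ), mul_assoc]
  gcongr
  have hint := (integrableOn_rpow_mul_exp (a := μ - a) (by linarith) one_pos).const_mul
    (C * x ^ (-a))
  have hval : ∫ t in Set.Ioi (0 : ℝ),
      C * x ^ (-a) * (t ^ (μ - a - 1) * Real.exp (-(1 * t))) =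
      C * Real.Gamma (μ - a) * x ^ (-a) := by
    rw [integral_const_mul, Real.integral_rpow_mul_exp_neg_mul_Ioi (by linarith) one_pos]
    simp; ring
  rw [← hval, ← Real.norm_eq_abs]
  refine norm_integral_le_of_norm_le hint ?_
  refine (ae_restrict_iff' measurableSet_Ioi).2 (Filter.Eventually.of_forall fun t ht => ?_)
  have ht : 0 < t := ht
  rw [norm_mul, Real.norm_of_nonneg (by positivity), Real.norm_eq_abs]
  calc t ^ (μ - 1) * Real.exp (-t) * |ml ρ (-(x * t))|
      ≤ t ^ (μ - 1) * Real.exp (-t) * (C * (x * t) ^ (-a)) := by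
        gcongr
        exact hC _ (by positivity)
    _ = _ := by
        rw [Real.mul_rpow hx.le ht.le, show μ - a - 1 = (μ - 1) + (-a) by ring,
          Real.rpow_add ht, one_mul]
        ring

/-! ### Square integrability of the kernel -/

/-- For `1 < ρ < 2`, `λ > 0` and `μ > 1/(2ρ)`, the kernel `u ↦ G_ρ(−u^ρ/λ)` of the
limit process belongs to `L²(0, ∞)`. -/
theorem genML_kernel_L2 (ρ μ lam : ℝ) (hρ₁ : 1 < ρ) (hρ₂ : ρ < 2)
    (hlam : 0 < lam) (hμ : 1 / (2 * ρ) < μ) :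
    IntegrableOn (fun u : ℝ => (genML ρ μ (-(u ^ ρ / lam))) ^ 2) (Set.Ioi 0) := by
  have hρ0 : 0 < ρ := by linarith
  have hμ0 : 0 < μ := lt_trans (by positivity) hμ
  have hlt : 1 / (2 * ρ) < min μ (1 / ρ) :=
    lt_min hμ (one_div_lt_one_div_of_lt hρ0 (by linarith))
  obtain ⟨a, ha1, ha2⟩ := exists_between hlt
  have ha0 : 0 < a := lt_trans (by positivity) ha1
  have haρ : 1 < 2 * (ρ * a) := by
    rw [div_lt_iff₀ (by positivity)] at ha1
    linarith
  obtain ⟨C, hC0, hC⟩ := exists_genML_le hρ₁ hρ₂ ha0.le (ha2.trans_le (min_le_right _ _)).le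
    (ha2.trans_le (min_le_left _ _))
  have hcont : Continuous fun u : ℝ => (genML ρ μ (-(u ^ ρ / lam))) ^ 2 := by
    have h1 := continuous_genML hρ₁ hμ0
    have h2 : Continuous fun u : ℝ => u ^ ρ := Real.continuous_rpow_const hρ0.le
    fun_prop
  rw [← Set.Ioc_union_Ioi_eq_Ioi zero_le_one]
  refine IntegrableOn.union (hcont.integrableOn_Ioc) ?_
  have hint := (integrableOn_Ioi_rpow_of_lt (a := -(2 * (ρ * a))) (by linarith)
    (zero_lt_one (α := ℝ))).const_mul ((C * lam ^ a) ^ 2)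
  refine hint.mono' hcont.aestronglyMeasurable ?_
  refine (ae_restrict_iff' measurableSet_Ioi).2 (Filter.Eventually.of_forall fun u hu => ?_)
  have hu : 0 < u := zero_lt_one.trans hu
  rw [norm_pow, Real.norm_eq_abs]
  have h := hC (u ^ ρ / lam) (by positivity)
  have he : C * (u ^ ρ / lam) ^ (-a) = C * lam ^ a * u ^ (-(ρ * a)) := by
    rw [Real.div_rpow (by positivity) hlam.le, ← Real.rpow_mul hu.le, Real.rpow_neg hlam.le,
      div_inv_eq_mul, mul_neg]
    ring
  rw [he] at h
  calc _ ≤ (C * lam ^ a * u ^ (-(ρ * a))) ^ 2 := by gcongr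
    _ = _ := by
      rw [mul_pow, ← Real.rpow_natCast (u ^ (-(ρ * a))), ← Real.rpow_mul hu.le]
      congr 2
      push_cast
      ring
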